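/- arXiv:2410.10451 — 4 statements merged into one kernel-verified Lean document; each statement's English description precedes it below -/
import Mathlib

section
/- Let E be a real inner product space, K a positive natural number, η ≥ 0, G ≥ 0, and Emax ≥ 1 a natural number. Suppose for each k ∈ Fin K the vector w_k ∈ E has the form w_k = w₀ − η • (∑_{e=0}^{s_k − 1} g_{k,e}) for some w₀ ∈ E, some s_k ≤ Emax − 1, and vectors g_{k,e} ∈ E with ‖g_{k,e}‖ ≤ G for every e < s_k. Let w̄ = (1/K) • ∑_{k} w_k be the average of the local models. Then ∑_{k ∈ Fin K} ‖w̄ − w_k‖² ≤ 4 K η² (Emax − 1)² G². -/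
open scoped RealInnerProductSpace

/-- Deterministic form of Lemma 1: bound on the total squared divergence between
local models and their average. -/
theorem local_models_divergence_bound
    {E : Type*} [NormedAddCommGroup E] [InnerProductSpace ℝ E]
    (K : ℕ) (hK : 0 < K) (η G : ℝ) (hη : 0 ≤ η) (hG : 0 ≤ G)
    (Emax : ℕ) (hE : 1 ≤ Emax)
    (w : Fin K → E) (w₀ : E) (s : Fin K → ℕ) (g : Fin K → ℕ → E)
    (hs : ∀ k, s k ≤ Emax - 1)
    (hg : ∀ k, ∀ e < s k, ‖g k e‖ ≤ G)
    (hw : ∀ k, w k = w₀ - η • ∑ e ∈ Finset.range (s k), g k e) :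
    ∑ k, ‖(1 / (K : ℝ)) • (∑ j, w j) - w k‖ ^ 2
      ≤ 4 * K * η ^ 2 * ((Emax : ℝ) - 1) ^ 2 * G ^ 2 := by
  have hK' : (0 : ℝ) < K := by exact_mod_cast hK
  have hd : ∀ k, ‖w k - w₀‖ ≤ η * (((Emax : ℝ) - 1) * G) := by
    intro k
    have h1 : ‖∑ e ∈ Finset.range (s k), g k e‖ ≤ (s k : ℝ) * G := by
      have := norm_sum_le_of_le (Finset.range (s k)) (f := g k) (n := fun _ => G)
        (fun e he => hg k e (Finset.mem_range.mp he))
      simpa using this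
    have h2 : (s k : ℝ) ≤ (Emax : ℝ) - 1 := by
      have h3 : s k + 1 ≤ Emax := by have := hs k; omega
      have h4 : (s k : ℝ) + 1 ≤ Emax := by exact_mod_cast h3
      linarith
    have h5 : w k - w₀ = -(η • ∑ e ∈ Finset.range (s k), g k e) := by
      rw [hw k]; abel
    rw [h5, norm_neg, norm_smul, Real.norm_of_nonneg hη]
    exact mul_le_mul_of_nonneg_left (h1.trans (mul_le_mul_of_nonneg_right h2 hG)) hη
  have hterm : ∀ k, ‖(1 / (K : ℝ)) • (∑ j, w j) - w k‖ ≤ 2 * (η * (((Emax : ℝ) - 1) * G)) := by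
    intro k
    have h1 : (1 / (K : ℝ)) • (∑ j, w j) - w k = (1 / (K : ℝ)) • ∑ j, (w j - w k) := by
      rw [Finset.sum_sub_distrib, smul_sub]
      congr 1
      rw [Finset.sum_const, Finset.card_univ, Fintype.card_fin, ← Nat.cast_smul_eq_nsmul ℝ,
        smul_smul, one_div, inv_mul_cancel₀ hK'.ne', one_smul]
    have h2 : ‖∑ j, (w j - w k)‖ ≤ (K : ℝ) * (2 * (η * (((Emax : ℝ) - 1) * G))) := by
      have := norm_sum_le_of_le (Finset.univ : Finset (Fin K)) (f := fun j => w j - w k)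
        (n := fun _ => 2 * (η * (((Emax : ℝ) - 1) * G))) (fun j _ => by
          have h3 : w j - w k = (w j - w₀) - (w k - w₀) := by abel
          show ‖w j - w k‖ ≤ _
          rw [h3]
          have := norm_sub_le (w j - w₀) (w k - w₀)
          linarith [hd j, hd k])
      simpa using this
    rw [h1, norm_smul, Real.norm_of_nonneg (by positivity), one_div, inv_mul_le_iff₀ hK']
    exact h2
  calc ∑ k, ‖(1 / (K : ℝ)) • (∑ j, w j) - w k‖ ^ 2
      ≤ ∑ _k : Fin K, (2 * (η * (((Emax : ℝ) - 1) * G))) ^ 2 :=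
        Finset.sum_le_sum fun k _ => pow_le_pow_left₀ (norm_nonneg _) (hterm k) 2
    _ = 4 * K * η ^ 2 * ((Emax : ℝ) - 1) ^ 2 * G ^ 2 := by
        rw [Finset.sum_const, Finset.card_univ, Fintype.card_fin, nsmul_eq_mul]
        ring
end

section
/- Let E be a real inner product space, K a positive natural number, η ≥ 0, G ≥ 0, L ≥ 0, ε ≥ 0, and Emax ≥ 1 a natural number. Suppose for each k ∈ Fin K the vector w_k ∈ E has the form w_k = w₀ − η • (∑_{e=0}^{s_k − 1} g_{k,e}) for some common w₀ ∈ E, some s_k ≤ Emax − 1, and vectors g_{k,e} ∈ E with ‖g_{k,e}‖ ≤ G for every e < s_k. Let w̄ = (1/K) • ∑_{k} w_k. Let ∇F : E → E be Lipschitz with constant L, and for each k let v_k ∈ E satisfy ‖∇F(w_k) − v_k‖ ≤ ε. Then ∑_{k ∈ Fin K} ‖∇F(w̄) − v_k‖² ≤ 8 K η² (Emax − 1)² G² L² + 2 K ε². -/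
open scoped RealInnerProductSpace

/-- Combination of Lemma 1 with the gradient divergence bound. -/
theorem gradient_divergence_from_local_steps
    {E : Type*} [NormedAddCommGroup E] [InnerProductSpace ℝ E]
    (K : ℕ) (hK : 0 < K) (η G L ε : ℝ) (hη : 0 ≤ η) (hG : 0 ≤ G)
    (hL : 0 ≤ L) (hε : 0 ≤ ε)
    (Emax : ℕ) (hE : 1 ≤ Emax)
    (w : Fin K → E) (w₀ : E) (s : Fin K → ℕ) (g : Fin K → ℕ → E)
    (hs : ∀ k, s k ≤ Emax - 1)
    (hg : ∀ k, ∀ e < s k, ‖g k e‖ ≤ G)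
    (hw : ∀ k, w k = w₀ - η • ∑ e ∈ Finset.range (s k), g k e)
    (gradF : E → E)
    (hLip : ∀ w₁ w₂ : E, ‖gradF w₁ - gradF w₂‖ ≤ L * ‖w₁ - w₂‖)
    (v : Fin K → E)
    (hv : ∀ k, ‖gradF (w k) - v k‖ ≤ ε) :
    ∑ k, ‖gradF ((1 / (K : ℝ)) • (∑ j, w j)) - v k‖ ^ 2
      ≤ 8 * K * η ^ 2 * ((Emax : ℝ) - 1) ^ 2 * G ^ 2 * L ^ 2 + 2 * K * ε ^ 2 := by
  have hKR : (0 : ℝ) < K := by exact_mod_cast hK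
  have hdist : ∀ k, ‖w k - w₀‖ ≤ η * (((Emax : ℝ) - 1) * G) := by
    intro k
    have h1 : w k - w₀ = -(η • ∑ e ∈ Finset.range (s k), g k e) := by
      rw [hw k]; abel
    rw [h1, norm_neg, norm_smul, Real.norm_of_nonneg hη]
    apply mul_le_mul_of_nonneg_left _ hη
    have h2 : ‖∑ e ∈ Finset.range (s k), g k e‖ ≤ ∑ e ∈ Finset.range (s k), G :=
      norm_sum_le_of_le _ (fun e he => hg k e (Finset.mem_range.mp he))
    rw [Finset.sum_const, Finset.card_range, nsmul_eq_mul] at h2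
    have h3 : (s k : ℝ) ≤ (Emax : ℝ) - 1 := by
      have h4 : s k + 1 ≤ Emax := by have := hs k; omega
      have h5 : (s k : ℝ) + 1 ≤ Emax := by exact_mod_cast h4
      linarith
    exact h2.trans (mul_le_mul_of_nonneg_right h3 hG)
  set R : ℝ := η * (((Emax : ℝ) - 1) * G) with hR
  set wb : E := (1 / (K : ℝ)) • (∑ j, w j) with hwb
  have hbar : ‖wb - w₀‖ ≤ R := by
    have h1 : wb - w₀ = (1 / (K : ℝ)) • ∑ j, (w j - w₀) := by
      rw [Finset.sum_sub_distrib, smul_sub, Finset.sum_const, Finset.card_univ,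
        Fintype.card_fin, ← Nat.cast_smul_eq_nsmul ℝ, smul_smul, one_div,
        inv_mul_cancel₀ hKR.ne', one_smul, hwb, one_div]
    have h2 : ‖∑ j, (w j - w₀)‖ ≤ ∑ _j : Fin K, R :=
      norm_sum_le_of_le _ (fun j _ => hdist j)
    rw [Finset.sum_const, Finset.card_univ, Fintype.card_fin, nsmul_eq_mul] at h2
    rw [h1, norm_smul, Real.norm_of_nonneg (by positivity), one_div, inv_mul_le_iff₀ hKR]
    exact h2
  have hk : ∀ k, ‖gradF wb - v k‖ ^ 2 ≤ 8 * R ^ 2 * L ^ 2 + 2 * ε ^ 2 := by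
    intro k
    have h1 : ‖wb - w k‖ ≤ 2 * R := by
      have h := norm_sub_le_norm_sub_add_norm_sub wb w₀ (w k)
      rw [norm_sub_rev w₀] at h
      linarith [hdist k]
    have h2 := norm_sub_le_norm_sub_add_norm_sub (gradF wb) (gradF (w k)) (v k)
    have h3 := (hLip wb (w k)).trans (mul_le_mul_of_nonneg_left h1 hL)
    have h4 : ‖gradF wb - v k‖ ≤ L * (2 * R) + ε := by linarith [hv k]
    have h5 := pow_le_pow_left₀ (norm_nonneg _) h4 2
    nlinarith [sq_nonneg (L * (2 * R) - ε)]
  calc ∑ k, ‖gradF wb - v k‖ ^ 2 ≤ ∑ _k : Fin K, (8 * R ^ 2 * L ^ 2 + 2 * ε ^ 2) :=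
        Finset.sum_le_sum (fun k _ => hk k)
    _ = 8 * K * η ^ 2 * ((Emax : ℝ) - 1) ^ 2 * G ^ 2 * L ^ 2 + 2 * K * ε ^ 2 := by
        rw [Finset.sum_const, Finset.card_univ, Fintype.card_fin, nsmul_eq_mul, hR]
        ring
end

section
/- Let E be a real inner product space and let F : E → ℝ be differentiable with gradient ∇F : E → E that is Lipschitz with constant L ≥ 0. Let w, u ∈ E, η > 0, p ∈ ℝ with 0 < p ≤ 1, and A ≥ 0, B ≥ 0 real numbers. Assume ⟪∇F(w), u⟫ ≥ (p/2)(‖∇F(w)‖² − B) and ‖u‖² ≤ p A. Let w⁺ = w − η • u. Then ‖∇F(w)‖² ≤ (2/(η p))(F(w) − F(w⁺)) + B + η L A. -/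
open scoped RealInnerProductSpace

/-- Per-round gradient bound assembled from the descent inequality and the
per-round bounds on the aggregated update. -/
theorem per_round_gradient_bound
    {E : Type*} [NormedAddCommGroup E] [InnerProductSpace ℝ E]
    (F : E → ℝ) (gradF : E → E) (F' : E → E →L[ℝ] ℝ)
    (hdiff : ∀ x : E, HasFDerivAt F (F' x) x)
    (hgrad : ∀ x v : E, F' x v = ⟪gradF x, v⟫)
    (L : ℝ) (hL : 0 ≤ L)
    (hLip : ∀ w₁ w₂ : E, ‖gradF w₁ - gradF w₂‖ ≤ L * ‖w₁ - w₂‖)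
    (w u : E) (η p A B : ℝ) (hη : 0 < η) (hp0 : 0 < p) (hp1 : p ≤ 1)
    (hA : 0 ≤ A) (hB : 0 ≤ B)
    (hinner : ⟪gradF w, u⟫ ≥ p / 2 * (‖gradF w‖ ^ 2 - B))
    (hu : ‖u‖ ^ 2 ≤ p * A) :
    ‖gradF w‖ ^ 2 ≤ 2 / (η * p) * (F w - F (w - η • u)) + B + η * L * A := by
  have hg : ∀ t : ℝ, HasDerivAt (fun t : ℝ => F (w - t • u)) (-⟪gradF (w - t • u), u⟫) t := by
    intro t
    have h1 : HasDerivAt (fun t : ℝ => w - t • u) (-u) t := by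
      have h := ((hasDerivAt_id t).smul_const u).const_sub w
      simpa using h
    have h2 := (hdiff (w - t • u)).comp_hasDerivAt t h1
    rw [hgrad, inner_neg_right] at h2
    exact h2
  have hb : ∀ t : ℝ, HasDerivAt
      (fun t : ℝ => F w + (t * (-⟪gradF w, u⟫) + t ^ 2 * (L / 2 * ‖u‖ ^ 2)))
      (-⟪gradF w, u⟫ + L * t * ‖u‖ ^ 2) t := by
    intro t
    have h := (((hasDerivAt_id t).mul_const (-⟪gradF w, u⟫)).add
      ((hasDerivAt_pow 2 t).mul_const (L / 2 * ‖u‖ ^ 2))).const_add (F w)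
    refine h.congr_deriv ?_
    norm_num
    ring
  have key := image_le_of_deriv_right_le_deriv_boundary (a := 0) (b := η)
    (f := fun t : ℝ => F (w - t • u))
    (fun t _ => (hg t).continuousAt.continuousWithinAt)
    (fun t _ => (hg t).hasDerivWithinAt)
    (B := fun t : ℝ => F w + (t * (-⟪gradF w, u⟫) + t ^ 2 * (L / 2 * ‖u‖ ^ 2)))
    (by simp)
    (fun t _ => (hb t).continuousAt.continuousWithinAt)
    (fun t _ => (hb t).hasDerivWithinAt)
    (by
      intro t ht
      have h1 := real_inner_le_norm (gradF w - gradF (w - t • u)) u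
      rw [inner_sub_left] at h1
      have h2 := hLip w (w - t • u)
      rw [sub_sub_cancel, norm_smul, Real.norm_of_nonneg ht.1] at h2
      have h3 := mul_le_mul_of_nonneg_right h2 (norm_nonneg u)
      nlinarith)
    (Set.right_mem_Icc.2 hη.le)
  have hηp : 0 < η * p := mul_pos hη hp0
  have h1 := mul_le_mul_of_nonneg_left hinner hη.le
  have h2 := mul_le_mul_of_nonneg_left hu (by positivity : 0 ≤ η ^ 2 * (L / 2))
  have h3 : (η * p) / 2 * (‖gradF w‖ ^ 2 - B - η * L * A) ≤ F w - F (w - η • u) := by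
    nlinarith
  have h4 := mul_le_mul_of_nonneg_left h3 (by positivity : 0 ≤ 2 / (η * p))
  have h5 : 2 / (η * p) * ((η * p) / 2 * (‖gradF w‖ ^ 2 - B - η * L * A))
      = ‖gradF w‖ ^ 2 - B - η * L * A := by
    field_simp
  linarith
end

section
/- Let E be a real inner product space, F : E → ℝ differentiable with gradient ∇F : E → E Lipschitz with constant L ≥ 0, and F_inf a real number with F_inf ≤ F(x) for all x ∈ E. Let T be a positive natural number, η > 0, and let ε_g ≥ 0, δ ≥ 0, G ≥ 0 be real numbers and Emax ≥ 1 a natural number. Let w : ℕ → E, u : ℕ → E, and p : ℕ → ℝ satisfy, for every t < T: (i) w (t+1) = w t − η • u t; (ii) 0 < p t ≤ 1; (iii) ⟪∇F(w t), u t⟫ ≥ (p t / 2)(‖∇F(w t)‖² − 2 ε_g² − 4 η² (Emax − 1)² G² L²); (iv) ‖u t‖² ≤ p t (δ² + G²). Assume moreover F(w t) ≤ F(w 0) for every t ≤ T. Then (1/T) ∑_{t=0}^{T−1} ‖∇F(w t)‖² ≤ (1/T) ∑_{t=0}^{T−1} (2/(η p t)) (F(w 0) − F_inf) + 2 ε_g²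 + η (δ² + G²) L + 4 η² (Emax − 1)² G² L². -/
open scoped RealInnerProductSpace

theorem descent_aux
    {E : Type*} [NormedAddCommGroup E] [InnerProductSpace ℝ E]
    (F : E → ℝ) (gradF : E → E) (F' : E → E →L[ℝ] ℝ)
    (hdiff : ∀ x : E, HasFDerivAt F (F' x) x)
    (hgradrep : ∀ x v : E, F' x v = ⟪gradF x, v⟫)
    (L : ℝ)
    (hLip : ∀ w₁ w₂ : E, ‖gradF w₁ - gradF w₂‖ ≤ L * ‖w₁ - w₂‖) (x v : E) :
    F (x + v) ≤ F x + ⟪gradF x, v⟫ + L / 2 * ‖v‖ ^ 2 := by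
  have hd : ∀ s : ℝ, HasDerivAt
      (fun s : ℝ => F (x + s • v) - s * ⟪gradF x, v⟫ - L / 2 * ‖v‖ ^ 2 * s ^ 2)
      (⟪gradF (x + s • v), v⟫ - ⟪gradF x, v⟫ - L * ‖v‖ ^ 2 * s) s := by
    intro s
    have h1 : HasDerivAt (fun s : ℝ => x + s • v) v s := by
      simpa using ((hasDerivAt_id s).smul_const v).const_add x
    have h2 := (hdiff (x + s • v)).comp_hasDerivAt s h1
    rw [hgradrep] at h2
    have h3 := (hasDerivAt_id s).mul_const ⟪gradF x, v⟫
    have h4 := (hasDerivAt_pow 2 s).const_mul (L / 2 * ‖v‖ ^ 2)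
    refine ((h2.sub h3).sub h4).congr_deriv ?_
    norm_num
    ring
  have hanti : AntitoneOn
      (fun s : ℝ => F (x + s • v) - s * ⟪gradF x, v⟫ - L / 2 * ‖v‖ ^ 2 * s ^ 2)
      (Set.Icc 0 1) := by
    apply antitoneOn_of_deriv_nonpos (convex_Icc 0 1)
    · exact fun s _ => (hd s).continuousAt.continuousWithinAt
    · exact fun s _ => (hd s).differentiableAt.differentiableWithinAt
    · intro s hs
      rw [interior_Icc] at hs
      rw [(hd s).deriv, ← inner_sub_left]
      have h1 := real_inner_le_norm (gradF (x + s • v) - gradF x) v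
      have h2 := hLip (x + s • v) x
      rw [add_sub_cancel_left, norm_smul, Real.norm_of_nonneg hs.1.le] at h2
      have h3 := mul_le_mul_of_nonneg_right h2 (norm_nonneg v)
      nlinarith
  have := hanti (Set.left_mem_Icc.2 zero_le_one) (Set.right_mem_Icc.2 zero_le_one) zero_le_one
  simp at this
  linarith

/-- Deterministic core of Theorem 1: convergence rate bound of the
mobility-aware vehicular federated learning scheme. -/
theorem mavfl_convergence
    {E : Type*} [NormedAddCommGroup E] [InnerProductSpace ℝ E]
    (F : E → ℝ) (gradF : E → E) (F' : E → E →L[ℝ] ℝ)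
    (hdiff : ∀ x : E, HasFDerivAt F (F' x) x)
    (hgradrep : ∀ x v : E, F' x v = ⟪gradF x, v⟫)
    (L : ℝ) (hL : 0 ≤ L)
    (hLip : ∀ w₁ w₂ : E, ‖gradF w₁ - gradF w₂‖ ≤ L * ‖w₁ - w₂‖)
    (Finf : ℝ) (hFinf : ∀ x : E, Finf ≤ F x)
    (T : ℕ) (hT : 0 < T) (η : ℝ) (hη : 0 < η)
    (εg δ G : ℝ) (hεg : 0 ≤ εg) (hδ : 0 ≤ δ) (hG : 0 ≤ G)
    (Emax : ℕ) (hE : 1 ≤ Emax)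
    (w u : ℕ → E) (p : ℕ → ℝ)
    (hupd : ∀ t < T, w (t + 1) = w t - η • u t)
    (hp : ∀ t < T, 0 < p t ∧ p t ≤ 1)
    (hinner : ∀ t < T, ⟪gradF (w t), u t⟫
      ≥ p t / 2 * (‖gradF (w t)‖ ^ 2 - 2 * εg ^ 2
          - 4 * η ^ 2 * ((Emax : ℝ) - 1) ^ 2 * G ^ 2 * L ^ 2))
    (hu : ∀ t < T, ‖u t‖ ^ 2 ≤ p t * (δ ^ 2 + G ^ 2))
    (hmono : ∀ t ≤ T, F (w t) ≤ F (w 0)) :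
    (1 / (T : ℝ)) * ∑ t ∈ Finset.range T, ‖gradF (w t)‖ ^ 2
      ≤ (1 / (T : ℝ)) * ∑ t ∈ Finset.range T, (2 / (η * p t)) * (F (w 0) - Finf)
        + 2 * εg ^ 2 + η * (δ ^ 2 + G ^ 2) * L
        + 4 * η ^ 2 * ((Emax : ℝ) - 1) ^ 2 * G ^ 2 * L ^ 2 := by
  have hTr : (0 : ℝ) < T := by exact_mod_cast hT
  have key : ∀ t ∈ Finset.range T, ‖gradF (w t)‖ ^ 2 ≤ (2 / (η * p t)) * (F (w 0) - Finf)
      + (2 * εg ^ 2 + η * (δ ^ 2 + G ^ 2) * L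
        + 4 * η ^ 2 * ((Emax : ℝ) - 1) ^ 2 * G ^ 2 * L ^ 2) := by
    intro t ht
    rw [Finset.mem_range] at ht
    have hpt := (hp t ht).1
    have h1 := descent_aux F gradF F' hdiff hgradrep L hLip (w t) (-(η • u t))
    rw [← sub_eq_add_neg, ← hupd t ht, inner_neg_right, inner_smul_right, norm_neg, norm_smul,
      Real.norm_of_nonneg hη.le, mul_pow] at h1
    have h2 := mul_le_mul_of_nonneg_left (hinner t ht) hη.le
    have h3 := mul_le_mul_of_nonneg_left (hu t ht) (by positivity : 0 ≤ L / 2 * η ^ 2)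
    have h4 := hmono t ht.le
    have h5 := hFinf (w (t + 1))
    have hpos : 0 < η * p t := mul_pos hη hpt
    have h6 : ‖gradF (w t)‖ ^ 2 - (2 * εg ^ 2 + η * (δ ^ 2 + G ^ 2) * L
        + 4 * η ^ 2 * ((Emax : ℝ) - 1) ^ 2 * G ^ 2 * L ^ 2)
        ≤ 2 * (F (w 0) - Finf) / (η * p t) := by
      rw [le_div_iff₀ hpos]
      linarith
    have h7 : (2 / (η * p t)) * (F (w 0) - Finf) = 2 * (F (w 0) - Finf) / (η * p t) := by ring
    linarith
  have hs := mul_le_mul_of_nonneg_left (Finset.sum_le_sum key) (by positivity : 0 ≤ 1 / (T : ℝ))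
  rw [Finset.sum_add_distrib, Finset.sum_const, Finset.card_range, nsmul_eq_mul, mul_add,
    ← mul_assoc (1 / (T : ℝ)) (T : ℝ), one_div_mul_cancel hTr.ne', one_mul] at hs
  linarith
end
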